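/- Let (a_i)_{i≥1} be a π-periodic sequence of real numbers, let A > 0 be an upper bound of the numbers |a_i|, and fix real numbers −A < c1 < c2 < A with θ = (c2 − c1)/(A − c1). Suppose {1,…,π} is partitioned as I0 ∪ J0 ∪ K0 with I0 ∪ K0 nonempty, such that a_i ≥ c2 for every i ∈ J0. Let I, J, K denote the sets of positive integers whose representative modulo π in {1,…,π} lies in I0, J0, K0 respectively. Let (b_j)_{j≥1} be the J-reduced sequence of (a_i) with renumbering i(j) (so i(j) is the j-th smallest element of I ∪ K and b_j = a_{i(j)}), and define d_j = b_j if i(j) ∈ I and d_j = −A if i(j) ∈ K. If (1/card(I0 ∪ K0))·Σ_{j : i(j) ∈ I0 ∪ K0} d_j ≥ c2, then the number of indices i ∈ I0 that are ultimate c1-Pliss times for (a_i) is at least θ·card(I0 ∪ K0). -/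

import Mathlib

/-- `m ≥ 1` is a `c`-Pliss time for the sequence `a` (indexed from `1`):
`∑_{i=k+1}^{m} a i ≥ c·(m-k)` for every `k = 0, 1, …, m-1`. -/
def PlissTime (a : ℕ → ℝ) (c : ℝ) (m : ℕ) : Prop :=
  1 ≤ m ∧ ∀ k < m, c * ((m : ℝ) - (k : ℝ)) ≤ ∑ i ∈ Finset.Icc (k + 1) m, a i

/-- The representative of a positive integer `i` modulo `π` lying in `{1, …, π}`. -/
def repMod (π i : ℕ) : ℕ := (i - 1) % π + 1

/-- The set of positive integers whose representative modulo `π` in `{1,…,π}` belongs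
to the finite set `S`. -/
def modSet (π : ℕ) (S : Finset ℕ) : Set ℕ := {i | 1 ≤ i ∧ repMod π i ∈ S}

/-- For a set `T` of positive integers, `reduceIdx T j` is the `j`-th smallest element of `T`
(for `j ≥ 1`); this is the renumbering giving the reduced sequence `b j = a (reduceIdx T j)`. -/
noncomputable def reduceIdx (T : Set ℕ) (j : ℕ) : ℕ := Nat.nth (· ∈ T) (j - 1)

/-!
With `E m = ∑_{i ≤ m} (a i - c)`, the `c`-Pliss times are the times at which `E` attains its running
maximum, so that maximum only grows at Pliss times `i`, and then by at most `a i - c`. For a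
`π`-periodic `a` the running maximum grows over the second period by at least `E π`. If `E π` is
nonnegative, Pliss times of the second period are ultimate ones, so `E π` is at most the sum of
`a i - c` over the ultimate Pliss times `i` of a period.

To localize to `I`, replace `a` by a lower bound `B ≤ c` on `K` and by `c` everywhere off `I ∪ K`.
This only lowers `a`, hence creates no Pliss times, and the terms `a i - c` off `I` become
nonpositive; those on `I` are at most `A - c`.
-/

section Reindexing

variable {M : Type*} [AddCommMonoid M]

open Classical in
lemma sum_reduceIdx_count (T : Set ℕ) (g : ℕ → M) (n : ℕ) :
    ∑ j ∈ Finset.Icc 1 (Nat.count (· ∈ T) n), g (reduceIdx T j) =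
      ∑ i ∈ Finset.range n with i ∈ T, g i := by
  induction n with
  | zero => simp
  | succ n ih =>
    by_cases hn : n ∈ T
    · have hnth : reduceIdx T (Nat.count (· ∈ T) n + 1) = n := Nat.nth_count hn
      rw [Nat.count_succ, if_pos hn, Finset.sum_Icc_succ_top (by omega), ih, hnth,
        Finset.sum_filter, Finset.sum_filter, Finset.sum_range_succ, if_pos hn]
    · rw [Nat.count_succ, if_neg hn, add_zero, ih, Finset.sum_filter, Finset.sum_filter,
        Finset.sum_range_succ, if_neg hn, add_zero]

variable {π i : ℕ}

lemma repMod_of_mem_Icc (hi : i ∈ Finset.Icc 1 π) : repMod π i = i := by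
  rw [Finset.mem_Icc] at hi
  rw [repMod, Nat.mod_eq_of_lt (by omega), Nat.sub_add_cancel hi.1]

lemma repMod_mem_Icc (hπ : 1 ≤ π) (i : ℕ) : repMod π i ∈ Finset.Icc 1 π := by
  have := Nat.mod_lt (i - 1) hπ
  rw [repMod, Finset.mem_Icc]
  omega

lemma repMod_add_period (hi : 1 ≤ i) : repMod π (i + π) = repMod π i := by
  rw [repMod, repMod, Nat.sub_add_comm hi, Nat.add_mod_right]

lemma apply_repMod {α : Type*} {a : ℕ → α} (hper : ∀ i, 1 ≤ i → a (i + π) = a i) (hi : 1 ≤ i) :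
    a (repMod π i) = a i := by
  have hshift : Function.Periodic (fun i => a (i + 1)) π := fun i => by
    simpa only [Nat.add_right_comm] using hper (i + 1) (by omega)
  simpa only [repMod, Nat.sub_add_cancel hi] using hshift.map_mod_nat (i - 1)

lemma sum_reduceIdx_modSet {S : Finset ℕ} (hS : S ⊆ Finset.Icc 1 π) (g : ℕ → M) :
    ∑ j ∈ Finset.Icc 1 S.card, g (reduceIdx (modSet π S) j) = ∑ i ∈ S, g i := by
  classical
  have hfilter : {i ∈ Finset.range (π + 1) | i ∈ modSet π S} = S := by
    ext i
    rw [Finset.mem_filter, Finset.mem_range]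
    refine ⟨fun ⟨hlt, hi, hrep⟩ => ?_, fun hi => ?_⟩
    · rwa [repMod_of_mem_Icc (Finset.mem_Icc.2 ⟨hi, Nat.lt_succ_iff.1 hlt⟩)] at hrep
    · have hmem := Finset.mem_Icc.1 (hS hi)
      exact ⟨by omega, hmem.1, by rwa [repMod_of_mem_Icc (hS hi)]⟩
  have hcount : Nat.count (· ∈ modSet π S) (π + 1) = S.card := by
    rw [Nat.count_eq_card_filter_range, hfilter]
  rw [← hcount, sum_reduceIdx_count, hfilter]

end Reindexing

/-- The partial sum `∑_{i=1}^{m} (a i - c)`, whose (weak) record times are the `c`-Pliss times. -/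
def cumExcess (a : ℕ → ℝ) (c : ℝ) (m : ℕ) : ℝ := ∑ i ∈ Finset.Icc 1 m, (a i - c)

/-- For a `π`-periodic sequence `a`, ultimate `c`-Pliss times are those `i` all of whose translates
by multiples of the period are `c`-Pliss times; `i` itself is not required to lie in `{1, …, π}`. -/
def UltimatePlissTime (π : ℕ) (a : ℕ → ℝ) (c : ℝ) (i : ℕ) : Prop :=
  ∀ n : ℕ, PlissTime a c (i + n * π)

section PlissTimes

variable {a b : ℕ → ℝ} {c : ℝ} {k m : ℕ}

lemma cumExcess_succ (a : ℕ → ℝ) (c : ℝ) (m : ℕ) :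
    cumExcess a c (m + 1) = cumExcess a c m + (a (m + 1) - c) :=
  Finset.sum_Icc_succ_top (by omega) _

lemma cumExcess_sub (a : ℕ → ℝ) (c : ℝ) (hkm : k ≤ m) :
    cumExcess a c m - cumExcess a c k =
      ∑ i ∈ Finset.Icc (k + 1) m, a i - c * ((m : ℝ) - (k : ℝ)) := by
  induction m, hkm using Nat.le_induction with
  | base => simp
  | succ m hkm ih =>
    rw [cumExcess_succ, Finset.sum_Icc_succ_top (by omega)]
    push_cast
    linarith

lemma plissTime_iff_cumExcess_le :
    PlissTime a c m ↔ 1 ≤ m ∧ ∀ k < m, cumExcess a c k ≤ cumExcess a c m := by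
  refine and_congr_right fun _ => forall₂_congr fun k hk => ?_
  rw [← sub_nonneg, ← cumExcess_sub a c hk.le, sub_nonneg]

lemma PlissTime.le (h : PlissTime a c m) : c ≤ a m := by
  obtain ⟨hm, hrecord⟩ := plissTime_iff_cumExcess_le.1 h
  obtain ⟨k, rfl⟩ := Nat.exists_eq_add_of_le' hm
  have := hrecord k k.lt_succ_self
  rw [cumExcess_succ] at this
  linarith

lemma PlissTime.mono (hab : ∀ i, 1 ≤ i → a i ≤ b i) (h : PlissTime a c m) : PlissTime b c m :=
  ⟨h.1, fun k hk => (h.2 k hk).trans <| Finset.sum_le_sum fun i hi =>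
    hab i ((Nat.le_add_left 1 k).trans (Finset.mem_Icc.1 hi).1)⟩

lemma UltimatePlissTime.le {π i : ℕ} (h : UltimatePlissTime π a c i) : c ≤ a i := by
  simpa using (h 0).le

open Classical in
lemma partialSups_cumExcess_succ_le (a : ℕ → ℝ) (c : ℝ) (m : ℕ) :
    partialSups (cumExcess a c) (m + 1) ≤
      partialSups (cumExcess a c) m + if PlissTime a c (m + 1) then a (m + 1) - c else 0 := by
  have hcurrent := le_partialSups (cumExcess a c) m
  rw [partialSups_add_one]
  split_ifs with hpliss
  · have hle := hpliss.le
    rw [cumExcess_succ]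
    exact sup_le (by linarith) (by linarith)
  · have hnot_record : cumExcess a c (m + 1) ≤ partialSups (cumExcess a c) m := by
      by_contra! hlt
      exact hpliss <| plissTime_iff_cumExcess_le.2 ⟨by omega, fun k hk =>
        (le_partialSups_of_le _ (Nat.lt_succ_iff.1 hk)).trans hlt.le⟩
    rw [add_zero, sup_eq_left.2 hnot_record]

open Classical in
lemma partialSups_cumExcess_add_le (a : ℕ → ℝ) (c : ℝ) (m p : ℕ) :
    partialSups (cumExcess a c) (m + p) ≤ partialSups (cumExcess a c) m +
      ∑ i ∈ Finset.Icc 1 p with PlissTime a c (m + i), (a (m + i) - c) := by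
  rw [Finset.sum_filter]
  induction p with
  | zero => simp
  | succ p ih =>
    rw [Finset.sum_Icc_succ_top (by omega), ← add_assoc, ← add_assoc]
    exact (partialSups_cumExcess_succ_le a c (m + p)).trans (by gcongr)

end PlissTimes

section Periodic

variable {π : ℕ} {a : ℕ → ℝ} {c : ℝ} {m : ℕ} (hper : ∀ i, 1 ≤ i → a (i + π) = a i)

include hper

lemma cumExcess_add_period (m : ℕ) :
    cumExcess a c (m + π) = cumExcess a c m + cumExcess a c π := by
  induction m with
  | zero => simp [cumExcess]
  | succ m ih =>
    rw [Nat.add_right_comm, cumExcess_succ, ih, Nat.add_right_comm, hper _ (by omega),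
      cumExcess_succ]
    ring

lemma PlissTime.of_add_period (hm : 1 ≤ m) (h : PlissTime a c (m + π)) : PlissTime a c m := by
  rw [plissTime_iff_cumExcess_le] at h ⊢
  refine ⟨hm, fun k hk => ?_⟩
  have := h.2 (k + π) (by omega)
  rw [cumExcess_add_period hper, cumExcess_add_period hper] at this
  linarith

lemma PlissTime.add_period (hexcess : 0 ≤ cumExcess a c π) (hπm : π ≤ m) (h : PlissTime a c m) :
    PlissTime a c (m + π) := by
  rw [plissTime_iff_cumExcess_le] at h ⊢
  refine ⟨by omega, fun k hk => ?_⟩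
  rw [cumExcess_add_period hper]
  rcases lt_or_ge k π with hkπ | hπk
  · linarith [h.2 k (by omega)]
  · obtain ⟨l, rfl⟩ := Nat.exists_eq_add_of_le' hπk
    rw [cumExcess_add_period hper]
    linarith [h.2 l (by omega)]

lemma PlissTime.ultimatePlissTime (hexcess : 0 ≤ cumExcess a c π) (hm : 1 ≤ m)
    (h : PlissTime a c (m + π)) : UltimatePlissTime π a c m
  | 0 => by simpa using h.of_add_period hper hm
  | 1 => by simpa using h
  | n + 2 => by
    have hprev := PlissTime.ultimatePlissTime hexcess hm h (n + 1)
    have hlate : π ≤ m + (n + 1) * π :=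
      Nat.le_add_left_of_le (Nat.le_mul_of_pos_left π n.succ_pos)
    have hstep := hprev.add_period hper hexcess hlate
    rwa [add_assoc, ← Nat.succ_mul] at hstep

lemma partialSups_cumExcess_add_period_ge (m : ℕ) :
    partialSups (cumExcess a c) m + cumExcess a c π ≤ partialSups (cumExcess a c) (m + π) := by
  rw [← le_sub_iff_add_le]
  refine partialSups_le _ _ _ fun k hk => ?_
  rw [le_sub_iff_add_le, ← cumExcess_add_period hper]
  exact le_partialSups_of_le _ (by omega)

open Classical in
lemma cumExcess_period_le_sum_ultimatePlissTime :
    cumExcess a c π ≤ ∑ i ∈ Finset.Icc 1 π with UltimatePlissTime π a c i, (a i - c) := by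
  have hnonneg : ∀ i ∈ {i ∈ Finset.Icc 1 π | UltimatePlissTime π a c i}, 0 ≤ a i - c :=
    fun i hi => sub_nonneg.2 (Finset.mem_filter.1 hi).2.le
  rcases lt_or_ge (cumExcess a c π) 0 with hneg | hexcess
  · exact hneg.le.trans (Finset.sum_nonneg hnonneg)
  have hgrowth : cumExcess a c π ≤
      ∑ i ∈ Finset.Icc 1 π with PlissTime a c (π + i), (a (π + i) - c) := by
    linarith [partialSups_cumExcess_add_period_ge hper (c := c) π,
      partialSups_cumExcess_add_le a c π π]
  calc
    cumExcess a c π ≤ ∑ i ∈ Finset.Icc 1 π with PlissTime a c (π + i), (a (π + i) - c) := hgrowth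
    _ = ∑ i ∈ Finset.Icc 1 π with PlissTime a c (π + i), (a i - c) := by
      refine Finset.sum_congr rfl fun i hi => ?_
      rw [add_comm, hper i (Finset.mem_Icc.1 (Finset.mem_filter.1 hi).1).1]
    _ ≤ ∑ i ∈ Finset.Icc 1 π with UltimatePlissTime π a c i, (a i - c) := by
      refine Finset.sum_le_sum_of_subset_of_nonneg (fun i hi => ?_) fun i hi _ => hnonneg i hi
      obtain ⟨hiπ, hpliss⟩ := Finset.mem_filter.1 hi
      rw [add_comm] at hpliss
      exact Finset.mem_filter.2
        ⟨hiπ, hpliss.ultimatePlissTime hper hexcess (Finset.mem_Icc.1 hiπ).1⟩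

end Periodic

/-- The sequence obtained from a `π`-periodic `a` by putting the lower bound `B` on the residues in
`K` and the constant `c` on those outside `I ∪ K`. On `I ∪ K` it takes the values `d` of the reduced
sequence; the value `c` makes the remaining positions contribute nothing to `cumExcess`. -/
noncomputable def localizedSeq (π : ℕ) (I K : Finset ℕ) (a : ℕ → ℝ) (B c : ℝ) (i : ℕ) : ℝ :=
  if repMod π i ∈ I then a i else if repMod π i ∈ K then B else c

section Localized

variable {π : ℕ} {I K : Finset ℕ} {a : ℕ → ℝ} {A B c : ℝ}

lemma localizedSeq_add_period (hper : ∀ i, 1 ≤ i → a (i + π) = a i) (i : ℕ) (hi : 1 ≤ i) :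
    localizedSeq π I K a B c (i + π) = localizedSeq π I K a B c i := by
  rw [localizedSeq, localizedSeq, repMod_add_period hi, hper i hi]

lemma localizedSeq_le (hπ : 1 ≤ π) (hper : ∀ i, 1 ≤ i → a (i + π) = a i)
    (hK : ∀ i ∈ K, B ≤ a i) (hrest : ∀ i ∈ Finset.Icc 1 π, i ∉ I → i ∉ K → c ≤ a i)
    (i : ℕ) (hi : 1 ≤ i) : localizedSeq π I K a B c i ≤ a i := by
  rw [localizedSeq]
  split_ifs with hiI hiK
  · exact le_rfl
  · exact apply_repMod hper hi ▸ hK _ hiK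
  · exact apply_repMod hper hi ▸ hrest _ (repMod_mem_Icc hπ i) hiI hiK

lemma cumExcess_localizedSeq (hIK : I ∪ K ⊆ Finset.Icc 1 π) :
    cumExcess (localizedSeq π I K a B c) c π =
      ∑ i ∈ I ∪ K, ((if repMod π i ∈ I then a i else B) - c) := by
  rw [cumExcess, ← Finset.sum_subset hIK]
  · refine Finset.sum_congr rfl fun i hi => ?_
    rw [localizedSeq, repMod_of_mem_Icc (hIK hi)]
    rw [Finset.mem_union] at hi
    split_ifs <;> tauto
  · intro i hi hiIK
    rw [Finset.mem_union, not_or] at hiIK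
    rw [localizedSeq, repMod_of_mem_Icc hi, if_neg hiIK.1, if_neg hiIK.2, sub_self]

open Classical in
lemma cumExcess_localizedSeq_le (hπ : 1 ≤ π) (hper : ∀ i, 1 ≤ i → a (i + π) = a i)
    (hBc : B ≤ c) (hcA : c ≤ A) (hI : ∀ i ∈ I, a i ≤ A) (hK : ∀ i ∈ K, B ≤ a i)
    (hrest : ∀ i ∈ Finset.Icc 1 π, i ∉ I → i ∉ K → c ≤ a i) :
    cumExcess (localizedSeq π I K a B c) c π ≤
      ({i ∈ I | UltimatePlissTime π a c i}.card : ℝ) * (A - c) := by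
  set e := localizedSeq π I K a B c
  have hultimate : ∀ i, UltimatePlissTime π e c i → UltimatePlissTime π a c i :=
    fun i h n => (h n).mono (localizedSeq_le hπ hper hK hrest)
  have hterm : ∀ i ∈ Finset.Icc 1 π, e i - c ≤ if i ∈ I then A - c else 0 := by
    intro i hi
    simp only [e, localizedSeq, repMod_of_mem_Icc hi]
    split_ifs with hiI hiK
    · linarith [hI i hiI]
    · linarith
    · exact (sub_self c).le
  calc
    cumExcess e c π ≤ ∑ i ∈ Finset.Icc 1 π with UltimatePlissTime π e c i, (e i - c) :=
      cumExcess_period_le_sum_ultimatePlissTime (localizedSeq_add_period hper)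
    _ ≤ ∑ i ∈ Finset.Icc 1 π with UltimatePlissTime π e c i, if i ∈ I then A - c else 0 :=
      Finset.sum_le_sum fun i hi => hterm i (Finset.mem_filter.1 hi).1
    _ = ({i ∈ {i ∈ Finset.Icc 1 π | UltimatePlissTime π e c i} | i ∈ I}.card : ℝ) * (A - c) := by
      rw [← Finset.sum_filter, Finset.sum_const, nsmul_eq_mul]
    _ ≤ ({i ∈ I | UltimatePlissTime π a c i}.card : ℝ) * (A - c) := by
      refine mul_le_mul_of_nonneg_right ?_ (sub_nonneg.2 hcA)
      gcongr
      intro i hi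
      simp only [Finset.mem_filter] at hi ⊢
      exact ⟨hi.2, hultimate i hi.1.2⟩

end Localized

theorem localized_pliss_periodic_general (π : ℕ) (hπ : 1 ≤ π) (a : ℕ → ℝ) (A B c1 c2 : ℝ)
    (hBc1 : B ≤ c1) (hc1A : c1 < A)
    (hper : ∀ i, 1 ≤ i → a (i + π) = a i)
    (I0 J0 K0 : Finset ℕ)
    (hunion : I0 ∪ J0 ∪ K0 = Finset.Icc 1 π)
    (hI0 : ∀ i ∈ I0, a i ≤ A) (hJ0 : ∀ i ∈ J0, c1 ≤ a i) (hK0 : ∀ i ∈ K0, B ≤ a i)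
    (hsum : c2 * ((I0 ∪ K0).card : ℝ) ≤
      ∑ j ∈ Finset.Icc 1 (I0 ∪ K0).card,
        (if repMod π (reduceIdx (modSet π (I0 ∪ K0)) j) ∈ I0
          then a (reduceIdx (modSet π (I0 ∪ K0)) j) else B)) :
    ((c2 - c1) / (A - c1)) * ((I0 ∪ K0).card : ℝ) ≤
      (({i | i ∈ I0 ∧ UltimatePlissTime π a c1 i} : Set ℕ).ncard : ℝ) := by
  classical
  have hIK : I0 ∪ K0 ⊆ Finset.Icc 1 π := by
    rw [← hunion]
    exact Finset.union_subset_union_left Finset.subset_union_left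
  have hrest : ∀ i ∈ Finset.Icc 1 π, i ∉ I0 → i ∉ K0 → c1 ≤ a i := by
    intro i hi hiI hiK
    simp only [← hunion, Finset.mem_union, hiI, hiK, false_or, or_false] at hi
    exact hJ0 i hi
  rw [sum_reduceIdx_modSet hIK fun i => if repMod π i ∈ I0 then a i else B] at hsum
  have hexcess : (c2 - c1) * ((I0 ∪ K0).card : ℝ) ≤
      cumExcess (localizedSeq π I0 K0 a B c1) c1 π := by
    rw [cumExcess_localizedSeq hIK, Finset.sum_sub_distrib, Finset.sum_const, nsmul_eq_mul]
    linarith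
  rw [← Finset.coe_filter, Set.ncard_coe_finset, div_mul_eq_mul_div,
    div_le_iff₀ (sub_pos.2 hc1A)]
  exact hexcess.trans (cumExcess_localizedSeq_le hπ hper hBc1 hc1A.le hI0 hK0 hrest)

/-- Let `a` be a `π`-periodic sequence, `A > 0` an upper bound for `|a i|`, and
`-A < c1 < c2 < A`, `θ = (c2-c1)/(A-c1)`. Partition `{1,…,π} = I0 ∪ J0 ∪ K0` with
`I0 ∪ K0 ≠ ∅` and `a i ≥ c2` on `J0`; let `I`, `J`, `K` be the positive integers whose
representative mod `π` lies in `I0`, `J0`, `K0` respectively. Let `b j = a (i(j))` be the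
`J`-reduced sequence (`i(j)` the `j`-th smallest element of `I ∪ K`) and let `d j = b j` if
`i(j) ∈ I`, `d j = -A` if `i(j) ∈ K`. If the average of `d j` over the indices `j` with
`i(j) ∈ I0 ∪ K0` (i.e. `j ∈ {1, …, card (I0 ∪ K0)}`) is at least `c2`, then at least
`θ·card (I0 ∪ K0)` many indices `i ∈ I0` are ultimate `c1`-Pliss times for `a`. -/
theorem localized_pliss_periodic (π : ℕ) (hπ : 1 ≤ π) (a : ℕ → ℝ) (A c1 c2 : ℝ)
    (hA : 0 < A) (haA : ∀ i, 1 ≤ i → |a i| ≤ A)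
    (hc1 : -A < c1) (hc12 : c1 < c2) (hc2A : c2 < A)
    (hper : ∀ i, 1 ≤ i → a (i + π) = a i)
    (I0 J0 K0 : Finset ℕ)
    (hIJ : Disjoint I0 J0) (hIK : Disjoint I0 K0) (hJK : Disjoint J0 K0)
    (hunion : I0 ∪ J0 ∪ K0 = Finset.Icc 1 π)
    (hne : (I0 ∪ K0).Nonempty)
    (hJ0 : ∀ i ∈ J0, c2 ≤ a i)
    (hsum : c2 * ((I0 ∪ K0).card : ℝ) ≤
      ∑ j ∈ Finset.Icc 1 (I0 ∪ K0).card,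
        (if repMod π (reduceIdx (modSet π (I0 ∪ K0)) j) ∈ I0
          then a (reduceIdx (modSet π (I0 ∪ K0)) j) else -A)) :
    ((c2 - c1) / (A - c1)) * ((I0 ∪ K0).card : ℝ) ≤
      (({i | i ∈ I0 ∧ ∀ n : ℕ, PlissTime a c1 (i + n * π)} : Set ℕ).ncard : ℝ) := by
  have habs : ∀ i ∈ I0 ∪ J0 ∪ K0, -A ≤ a i ∧ a i ≤ A := fun i hi =>
    abs_le.1 (haA i (Finset.mem_Icc.1 (hunion ▸ hi)).1)
  exact localized_pliss_periodic_general π hπ a A (-A) c1 c2 hc1.le (hc12.trans hc2A) hper I0 J0 K0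
    hunion (fun i hi => (habs i (by simp [hi])).2) (fun i hi => hc12.le.trans (hJ0 i hi))
    (fun i hi => (habs i (by simp [hi])).1) hsum
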